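/- Let G be a group generated by a finite subset S with 1 ∈ S, and let k ≥ 2 be an integer with |S| ≥ k + 1. Suppose there exists a nonempty finite subset T ⊆ G such that TS is a proper subset of G and k(|TS| − |T|) < (k − 1)|S| (i.e. |TS| < |T| + (1 − 1/k)|S| and |TS| < |G|). Then there exists a finite proper subgroup H of G such that |HS| ≤ (k − 1)|H| or |SH| ≤ (k − 1)|H|. -/

import Mathlib

open Pointwise

/-!
Hamidoune's isoperimetric method. Among the finite nonempty `X` with `X * S ≠ G`, call those
minimising `#(X * S) - #X` fragments, and those fragments of least cardinality atoms. By
submodularity of `X ↦ #(X * S)`, two intersecting fragments `A`, `B` meet in a fragment, provided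
`A ∪ B` is not too large, which holds as soon as `#B ≤ #(G \ A * S)`. Under this proviso distinct
translates of an atom are disjoint, so the translate of an atom through `1` is a subgroup. The
proviso is automatic if `G` is infinite. If `G` is finite, `X ↦ G \ X * S` maps fragments of `S` to
fragments of `S⁻¹`, so it holds for whichever of `S` and `S⁻¹` has the smaller atoms. The resulting
subgroup `H` has `#(H * S) - #H ≤ #(T * S) - #T` (or the same with `S * H`), and since `#H` divides
`#(H * S)`, this inequality rounds to the required bound.
-/

theorem le_sub_one_mul_of_dvd {k m n s : ℕ} (hdvd : n ∣ m) (hsm : s ≤ m)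
    (hlt : k * (m - n) < (k - 1) * s) : m ≤ (k - 1) * n := by
  obtain ⟨c, rfl⟩ := hdvd
  suffices c ≤ k - 1 by
    rw [mul_comm]
    gcongr
  by_contra! hkc
  have hk : k ≤ c := by omega
  have hge : (k - 1) * (n * c) ≤ k * (n * c - n) := calc
    (k - 1) * (n * c) = k * (n * c) - n * c := by rw [Nat.sub_mul, one_mul]
    _ ≤ k * (n * c) - k * n := by
      rw [mul_comm k n]
      gcongr
    _ = k * (n * c - n) := by rw [Nat.mul_sub]
  exact absurd hlt (not_lt.2 ((Nat.mul_le_mul_left _ hsm).trans hge))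

section Subgroup

variable {G : Type*} [Group G]

theorem ncard_subgroup_mul_inv (H : Subgroup G) (s : Set G) :
    ((H : Set G) * s⁻¹).ncard = (s * (H : Set G)).ncard := by
  rw [← Set.ncard_inv, mul_inv_rev, inv_inv, inv_coe_set]

variable {H : Subgroup G} {s : Set G} {k : ℕ}

theorem ncard_mul_subgroup_le (hH : (H : Set G).Finite) (hs : s.Finite)
    (hlt : k * ((s * (H : Set G)).ncard - Nat.card H) < (k - 1) * s.ncard) :
    (s * (H : Set G)).ncard ≤ (k - 1) * Nat.card H := by
  have hdvd : Nat.card H ∣ (s * (H : Set G)).ncard := by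
    rw [← Nat.card_coe_set_eq, Subgroup.card_mul_eq_card_subgroup_mul_card_quotient]
    exact dvd_mul_right _ _
  have hsub : s ⊆ s * (H : Set G) := Set.subset_mul_left s H.one_mem
  exact le_sub_one_mul_of_dvd hdvd (Set.ncard_le_ncard hsub (hs.mul hH)) hlt

theorem ncard_subgroup_mul_le (hH : (H : Set G).Finite) (hs : s.Finite)
    (hlt : k * (((H : Set G) * s).ncard - Nat.card H) < (k - 1) * s.ncard) :
    ((H : Set G) * s).ncard ≤ (k - 1) * Nat.card H := by
  rw [← inv_inv s, ncard_subgroup_mul_inv] at hlt ⊢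
  rw [inv_inv, ← Set.ncard_inv s] at hlt
  exact ncard_mul_subgroup_le hH hs.inv hlt

end Subgroup

section Isoperimetric

open MulAction
open scoped Finset

variable {G : Type*} [Group G] [DecidableEq G] {S T A B X : Finset G}

/-- The sets over which the isoperimetric problem for `S` is posed: `X` is nonempty and `X * S` is
not the whole group. -/
structure IsSeparating (S X : Finset G) : Prop where
  nonempty : X.Nonempty
  mul_ne_univ : (↑(X * S) : Set G) ≠ Set.univ

/-- A fragment of `S` is a separating set `X` minimising `#(X * S) - #X`; the inequality is
rearranged so as to avoid subtraction. -/
structure IsFragment (S X : Finset G) : Prop extends IsSeparating S X where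
  card_mul_add_card_le : ∀ Y, IsSeparating S Y → #(X * S) + #Y ≤ #(Y * S) + #X

/-- An atom of `S` in the sense of Hamidoune: a fragment of least cardinality. -/
structure IsAtomicFragment (S X : Finset G) : Prop extends IsFragment S X where
  card_le : ∀ Y, IsFragment S Y → #X ≤ #Y

theorem IsSeparating.mono (hB : IsSeparating S B) (hA : A.Nonempty) (hAB : A ⊆ B) :
    IsSeparating S A where
  nonempty := hA
  mul_ne_univ h := hB.mul_ne_univ <|
    Set.eq_univ_of_subset (Finset.coe_subset.2 (Finset.mul_subset_mul_right hAB)) h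

theorem IsSeparating.smul (hX : IsSeparating S X) (g : G) : IsSeparating S (g • X) where
  nonempty := hX.nonempty.smul_finset
  mul_ne_univ := by
    rw [smul_mul_assoc, Finset.coe_smul_finset, Ne, Set.smul_set_eq_univ]
    exact hX.mul_ne_univ

theorem IsFragment.smul (hX : IsFragment S X) (g : G) : IsFragment S (g • X) where
  toIsSeparating := hX.toIsSeparating.smul g
  card_mul_add_card_le := by
    simpa only [smul_mul_assoc, Finset.card_smul_finset] using hX.card_mul_add_card_le

theorem IsAtomicFragment.smul (hX : IsAtomicFragment S X) (g : G) :
    IsAtomicFragment S (g • X) where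
  toIsFragment := hX.toIsFragment.smul g
  card_le := by simpa only [Finset.card_smul_finset] using hX.card_le

theorem exists_isFragment (hS : S.Nonempty) (hT : IsSeparating S T) : ∃ X, IsFragment S X := by
  obtain ⟨X, hX⟩ :=
    exists_minimalFor_of_wellFoundedLT (IsSeparating S) (fun Y ↦ #(Y * S) - #Y) ⟨T, hT⟩
  refine ⟨X, hX.prop, fun Y hY ↦ ?_⟩
  have hYX : #(X * S) - #X ≤ #(Y * S) - #Y := hX.le hY
  have hXS : #X ≤ #(X * S) := Finset.card_le_card_mul_right hS
  have hYS : #Y ≤ #(Y * S) := Finset.card_le_card_mul_right hS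
  omega

theorem exists_isAtomicFragment (hS : S.Nonempty) (hT : IsSeparating S T) :
    ∃ X, IsAtomicFragment S X := by
  obtain ⟨X, hX⟩ :=
    exists_minimalFor_of_wellFoundedLT (IsFragment S) Finset.card (exists_isFragment hS hT)
  exact ⟨X, hX.prop, fun _ ↦ hX.le⟩

theorem card_union_mul_add_card_inter_mul_le (S A B : Finset G) :
    #((A ∪ B) * S) + #((A ∩ B) * S) ≤ #(A * S) + #(B * S) := by
  rw [Finset.union_mul, ← Finset.card_union_add_card_inter (A * S)]
  gcongr
  exact Finset.inter_mul_subset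

theorem IsFragment.union_mul_ne_univ (hB : IsFragment S B) (hAB : (A ∩ B).Nonempty)
    (hcard : (#B : ℕ∞) ≤ (↑(A * S) : Set G)ᶜ.encard) :
    (↑((A ∪ B) * S) : Set G) ≠ Set.univ := by
  intro huniv
  have hcompl : (↑(A * S) : Set G)ᶜ ⊆ ↑((B * S) \ (A * S)) := by
    rw [Finset.union_mul, Finset.coe_union] at huniv
    rw [Finset.coe_sdiff, Set.sdiff_eq]
    exact Set.subset_inter (Set.compl_subset_iff_union.2 huniv) subset_rfl
  have hB_le : #B ≤ #((B * S) \ (A * S)) := by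
    exact_mod_cast hcard.trans ((Set.encard_le_encard hcompl).trans_eq
      (Set.encard_coe_eq_coe_finsetCard _))
  have hinter : #((A ∩ B) * S) ≤ #((A * S) ∩ (B * S)) :=
    Finset.card_le_card Finset.inter_mul_subset
  have hsep : IsSeparating S (A ∩ B) := hB.mono hAB Finset.inter_subset_right
  have hfrag := hB.card_mul_add_card_le _ hsep
  have hsplit := Finset.card_sdiff_add_card_inter (B * S) (A * S)
  rw [Finset.inter_comm] at hsplit
  have := hAB.card_pos
  omega

theorem IsFragment.inter (hA : IsFragment S A) (hB : IsFragment S B)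
    (hAB : (A ∩ B).Nonempty) (hcard : (#B : ℕ∞) ≤ (↑(A * S) : Set G)ᶜ.encard) :
    IsFragment S (A ∩ B) where
  toIsSeparating := hA.mono hAB Finset.inter_subset_left
  card_mul_add_card_le Y hY := by
    have hunion : IsSeparating S (A ∪ B) :=
      ⟨hA.nonempty.mono Finset.subset_union_left, hB.union_mul_ne_univ hAB hcard⟩
    have hA_le := hA.card_mul_add_card_le _ hunion
    have hB_le := hB.card_mul_add_card_le Y hY
    have hsubmod := card_union_mul_add_card_inter_mul_le S A B
    have hcards := Finset.card_union_add_card_inter A B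
    omega

theorem IsAtomicFragment.eq_of_inter_nonempty (hA : IsAtomicFragment S A)
    (hB : IsAtomicFragment S B) (hAB : (A ∩ B).Nonempty)
    (hcard : (#B : ℕ∞) ≤ (↑(A * S) : Set G)ᶜ.encard) : A = B := by
  have hinter : IsFragment S (A ∩ B) := hA.toIsFragment.inter hB.toIsFragment hAB hcard
  have hA_eq : A ∩ B = A :=
    Finset.eq_of_subset_of_card_le Finset.inter_subset_left (hA.card_le _ hinter)
  have hB_eq : A ∩ B = B :=
    Finset.eq_of_subset_of_card_le Finset.inter_subset_right (hB.card_le _ hinter)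
  exact hA_eq.symm.trans hB_eq

theorem coe_stabilizer_eq_of_forall_smul_eq (h1 : (1 : G) ∈ A) (hA : ∀ a ∈ A, a • A = A) :
    (stabilizer G A : Set G) = A := by
  ext g
  refine ⟨fun hg ↦ ?_, hA g⟩
  have hgA : g • (1 : G) ∈ g • A := Finset.smul_mem_smul_finset h1
  rwa [mem_stabilizer_iff.1 hg, smul_eq_mul, mul_one] at hgA

theorem IsAtomicFragment.coe_stabilizer_eq (hA : IsAtomicFragment S A) (h1 : (1 : G) ∈ A)
    (hcard : (#A : ℕ∞) ≤ (↑(A * S) : Set G)ᶜ.encard) :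
    (stabilizer G A : Set G) = A := by
  refine coe_stabilizer_eq_of_forall_smul_eq h1 fun a ha ↦ ?_
  have ha_mem : a ∈ A ∩ a • A :=
    Finset.mem_inter.2 ⟨ha, Finset.mem_smul_finset.2 ⟨1, h1, mul_one a⟩⟩
  refine (hA.eq_of_inter_nonempty (hA.smul a) ⟨a, ha_mem⟩ ?_).symm
  rwa [Finset.card_smul_finset]

theorem IsSeparating.subgroup_ne_top (hA : IsSeparating S A) (hS : S.Nonempty) {H : Subgroup G}
    (hH : (H : Set G) = A) : H ≠ ⊤ := by
  rintro rfl
  apply hA.mul_ne_univ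
  rw [Finset.coe_mul, ← hH, Subgroup.coe_top, Set.univ_mul hS.to_set]

theorem IsAtomicFragment.exists_subgroup_ncard_mul_add_card_le (hA : IsAtomicFragment S A)
    (hS : S.Nonempty) (hcard : (#A : ℕ∞) ≤ (↑(A * S) : Set G)ᶜ.encard) :
    ∃ H : Subgroup G, (H : Set G).Finite ∧ H ≠ ⊤ ∧ ∀ Y, IsSeparating S Y →
      ((H : Set G) * (S : Set G)).ncard + #Y ≤ #(Y * S) + Nat.card H := by
  obtain ⟨a, ha⟩ := hA.nonempty
  let F := a⁻¹ • A
  have hF : IsAtomicFragment S F := hA.smul a⁻¹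
  have h1 : (1 : G) ∈ F := Finset.mem_smul_finset.2 ⟨a, ha, inv_mul_cancel a⟩
  have hFcard : (#F : ℕ∞) ≤ (↑(F * S) : Set G)ᶜ.encard := by
    rwa [smul_mul_assoc, Finset.coe_smul_finset, ← Set.smul_set_compl, Set.encard_smul_set,
      Finset.card_smul_finset]
  have hH : (stabilizer G F : Set G) = F := hF.coe_stabilizer_eq h1 hFcard
  refine ⟨stabilizer G F, hH ▸ F.finite_toSet, hF.subgroup_ne_top hS hH, fun Y hY ↦ ?_⟩
  have hcardH : Nat.card (stabilizer G F) = #F := by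
    rw [← SetLike.coe_sort_coe, Nat.card_coe_set_eq, hH, Set.ncard_coe_finset]
  rw [hcardH, hH, ← Finset.coe_mul, Set.ncard_coe_finset]
  exact hF.card_mul_add_card_le Y hY

section Fintype

variable [Fintype G]

theorem compl_mul_mul_inv_subset (X S : Finset G) : (X * S)ᶜ * S⁻¹ ⊆ Xᶜ := by
  refine Finset.mul_subset_iff.2 fun y hy t ht ↦ ?_
  rw [Finset.mem_compl] at hy ⊢
  intro hyt
  exact hy (Finset.mem_mul.2 ⟨y * t, hyt, t⁻¹, Finset.mem_inv'.1 ht, mul_inv_cancel_right y t⟩)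

theorem card_compl_mul_mul_inv_add_card_le (X S : Finset G) :
    #((X * S)ᶜ * S⁻¹) + #X ≤ Fintype.card G := by
  grw [compl_mul_mul_inv_subset, Finset.card_compl_add_card]

theorem IsSeparating.compl_mul (hX : IsSeparating S X) : IsSeparating S⁻¹ (X * S)ᶜ where
  nonempty := by
    rw [← Finset.coe_nonempty, Finset.coe_compl, Set.nonempty_compl]
    exact hX.mul_ne_univ
  mul_ne_univ h := by
    have hcard := card_compl_mul_mul_inv_add_card_le X S
    rw [Finset.coe_eq_univ.1 h, Finset.card_univ] at hcard
    have := hX.nonempty.card_pos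
    omega

theorem IsFragment.compl_mul (hX : IsFragment S X) : IsFragment S⁻¹ (X * S)ᶜ where
  toIsSeparating := hX.toIsSeparating.compl_mul
  card_mul_add_card_le Y hY := by
    have hYdual := hY.compl_mul
    have hYcard := card_compl_mul_mul_inv_add_card_le Y S⁻¹
    rw [inv_inv] at hYdual hYcard
    have hX_le := hX.card_mul_add_card_le _ hYdual
    have hXcard := card_compl_mul_mul_inv_add_card_le X S
    have hXcompl := Finset.card_compl_add_card (X * S)
    have hYcompl := Finset.card_compl_add_card (Y * S⁻¹)
    omega

theorem IsAtomicFragment.card_le_card_compl_mul_or (hA : IsAtomicFragment S A)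
    (hB : IsAtomicFragment S⁻¹ B) : #A ≤ #(A * S)ᶜ ∨ #B ≤ #(B * S⁻¹)ᶜ := by
  have hBdual := hB.toIsFragment.compl_mul
  rw [inv_inv] at hBdual
  exact (le_total #A #B).imp (fun hle ↦ hle.trans (hB.card_le _ hA.toIsFragment.compl_mul))
    (fun hle ↦ hle.trans (hA.card_le _ hBdual))

end Fintype

theorem IsSeparating.exists_subgroup_ncard_mul_add_card_le_of_finite [Finite G] (hS : S.Nonempty)
    (hT : IsSeparating S T) :
    ∃ H : Subgroup G, (H : Set G).Finite ∧ H ≠ ⊤ ∧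
      (((H : Set G) * (S : Set G)).ncard + #T ≤ #(T * S) + Nat.card H ∨
        ((S : Set G) * (H : Set G)).ncard + #T ≤ #(T * S) + Nat.card H) := by
  have := Fintype.ofFinite G
  have encard_compl (X : Finset G) : (↑X : Set G)ᶜ.encard = #Xᶜ := by
    rw [← Finset.coe_compl, Set.encard_coe_eq_coe_finsetCard]
  obtain ⟨A, hA⟩ := exists_isAtomicFragment hS hT
  obtain ⟨B, hB⟩ := exists_isAtomicFragment hS.inv hT.compl_mul
  obtain hcard | hcard := hA.card_le_card_compl_mul_or hB
  · obtain ⟨H, hfin, hne, hle⟩ :=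
      hA.exists_subgroup_ncard_mul_add_card_le hS (by rw [encard_compl]; exact_mod_cast hcard)
    exact ⟨H, hfin, hne, .inl (hle T hT)⟩
  · obtain ⟨H, hfin, hne, hle⟩ :=
      hB.exists_subgroup_ncard_mul_add_card_le hS.inv (by rw [encard_compl]; exact_mod_cast hcard)
    refine ⟨H, hfin, hne, .inr ?_⟩
    have hdual_le := hle _ hT.compl_mul
    rw [Finset.coe_inv, ncard_subgroup_mul_inv] at hdual_le
    have hTcard := card_compl_mul_mul_inv_add_card_le T S
    have hTcompl := Finset.card_compl_add_card (T * S)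
    omega

theorem IsSeparating.exists_subgroup_ncard_mul_add_card_le (hS : S.Nonempty)
    (hT : IsSeparating S T) :
    ∃ H : Subgroup G, (H : Set G).Finite ∧ H ≠ ⊤ ∧
      (((H : Set G) * (S : Set G)).ncard + #T ≤ #(T * S) + Nat.card H ∨
        ((S : Set G) * (H : Set G)).ncard + #T ≤ #(T * S) + Nat.card H) := by
  obtain hfinite | hinfinite := finite_or_infinite G
  · exact hT.exists_subgroup_ncard_mul_add_card_le_of_finite hS
  · obtain ⟨A, hA⟩ := exists_isAtomicFragment hS hT
    have hcompl : (↑(A * S) : Set G)ᶜ.encard = ⊤ :=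
      Set.encard_eq_top_iff.2 (A * S).finite_toSet.infinite_compl
    obtain ⟨H, hfin, hne, hle⟩ := hA.exists_subgroup_ncard_mul_add_card_le hS (hcompl ▸ le_top)
    exact ⟨H, hfin, hne, .inl (hle T hT)⟩

end Isoperimetric

theorem stmt_13_general {G : Type*} [Group G] [DecidableEq G] (S : Finset G) (k : ℕ)
    (T : Finset G) (hT : T.Nonempty) (hproper : (↑(T * S) : Set G) ≠ Set.univ)
    (hsmall : k * ((T * S).card - T.card) < (k - 1) * S.card) :
    ∃ H : Subgroup G, (H : Set G).Finite ∧ H ≠ ⊤ ∧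
      (((H : Set G) * (↑S : Set G)).ncard ≤ (k - 1) * Nat.card H ∨
       ((↑S : Set G) * (H : Set G)).ncard ≤ (k - 1) * Nat.card H) := by
  have hS : S.Nonempty := Finset.card_pos.1 (pos_of_mul_pos_right (pos_of_gt hsmall) zero_le)
  have hT_sep : IsSeparating S T := ⟨hT, hproper⟩
  obtain ⟨H, hfin, hne, hle⟩ := hT_sep.exists_subgroup_ncard_mul_add_card_le hS
  have excess_lt {n : ℕ} (hn : n + T.card ≤ (T * S).card + Nat.card H) :
      k * (n - Nat.card H) < (k - 1) * (S : Set G).ncard := by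
    rw [Set.ncard_coe_finset]
    exact (Nat.mul_le_mul_left k (by omega)).trans_lt hsmall
  exact ⟨H, hfin, hne, hle.imp
    (fun h ↦ ncard_subgroup_mul_le hfin S.finite_toSet (excess_lt h))
    (fun h ↦ ncard_mul_subgroup_le hfin S.finite_toSet (excess_lt h))⟩

/-- Let `G` be a group generated by a finite subset `S` with `1 ∈ S`, and `k ≥ 2`
an integer with `|S| ≥ k + 1`. Suppose there exists a nonempty finite `T ⊆ G` with
`TS` a proper subset of `G` and `k(|TS| − |T|) < (k − 1)|S|`. Then there exists a
finite proper subgroup `H` of `G` with `|HS| ≤ (k − 1)|H|` or `|SH| ≤ (k − 1)|H|`. -/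
theorem stmt_13 {G : Type*} [Group G] [DecidableEq G] (S : Finset G)
    (h1 : (1 : G) ∈ S) (hgen : Subgroup.closure (S : Set G) = ⊤)
    (k : ℕ) (hk : 2 ≤ k) (hSk : k + 1 ≤ S.card)
    (T : Finset G) (hT : T.Nonempty)
    (hproper : (↑(T * S) : Set G) ≠ Set.univ)
    (hsmall : k * ((T * S).card - T.card) < (k - 1) * S.card) :
    ∃ H : Subgroup G, (H : Set G).Finite ∧ H ≠ ⊤ ∧
      (((H : Set G) * (↑S : Set G)).ncard ≤ (k - 1) * Nat.card H ∨
       ((↑S : Set G) * (H : Set G)).ncard ≤ (k - 1) * Nat.card H) :=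
  stmt_13_general S k T hT hproper hsmall
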